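/- Speculative sampling is distributionally invariant: let V be a finite vocabulary and let p and q be probability mass functions on V with q(x) > 0 for all x in the support of q. Sample x ~ q; accept x with probability min(1, p(x)/q(x)); upon rejection, resample a token from the normalized residual distribution p'(x) = max(0, p(x) - q(x)) / Σ_{x'} max(0, p(x') - q(x')). Then for every x' ∈ V, the probability that the final emitted token equals x' is exactly p(x'). -/

import Mathlib

open Finset

/-- Speculative sampling is distributionally invariant: drafting `x ~ q`, accepting with
probability `min 1 (p x / q x)`, and on rejection resampling from the normalized residual
`max 0 (p x - q x) / Z` yields exactly the distribution `p`. -/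
theorem speculative_sampling_invariant {V : Type*} [Fintype V]
    (p q : V → ℝ)
    (hp0 : ∀ x, 0 ≤ p x) (hq0 : ∀ x, 0 ≤ q x)
    (hp1 : ∑ x, p x = 1) (hq1 : ∑ x, q x = 1)
    (hqpos : ∀ x ∈ Function.support q, 0 < q x)
    (hpq : p ≠ q) (x' : V) :
    q x' * min 1 (p x' / q x')
      + (∑ x, q x * (1 - min 1 (p x / q x)))
        * (max 0 (p x' - q x') / ∑ x, max 0 (p x - q x))
      = p x' := by
  have hm : ∀ x, q x * min 1 (p x / q x) = p x - max 0 (p x - q x) := by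
    intro x
    rcases (hq0 x).eq_or_lt with h | h
    · rw [← h]
      simp [hp0 x]
    · rw [mul_min_of_nonneg _ _ (hq0 x), mul_div_cancel₀ _ h.ne', mul_one]
      rcases le_total (p x) (q x) with h1 | h1
      · rw [min_eq_right h1, max_eq_left (by linarith)]; ring
      · rw [min_eq_left h1, max_eq_right (by linarith)]; ring
  have hs : ∑ x, q x * (1 - min 1 (p x / q x)) = ∑ x, max 0 (p x - q x) := by
    have : ∀ x, q x * (1 - min 1 (p x / q x)) = q x - p x + max 0 (p x - q x) := by
      intro x
      rw [mul_sub, hm x]; ring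
    simp only [this, Finset.sum_add_distrib, Finset.sum_sub_distrib, hp1, hq1]
    ring
  have hZ : ∑ x, max 0 (p x - q x) ≠ 0 := by
    intro h
    rw [Finset.sum_eq_zero_iff_of_nonneg (fun x _ => le_max_left _ _)] at h
    have hle : ∀ x ∈ Finset.univ, p x ≤ q x := by
      intro x hx
      have h1 := h x hx
      have h2 := le_max_right 0 (p x - q x)
      linarith
    have := (Finset.sum_eq_sum_iff_of_le hle).1 (hp1.trans hq1.symm)
    exact hpq (funext fun x => this x (Finset.mem_univ x))
  rw [hs, hm, mul_div_cancel₀ _ hZ]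
  ring
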